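/- For any k, l ∈ ℝ and δ > 0 there exists a constant C = C(k,l,δ) such that for every Schwartz function u on ℝ³, ‖u‖²_{H^k_l(ℝ³)} ≤ C ‖u‖_{H^{k+δ}_{2l}(ℝ³)} ‖u‖_{H^{k-δ}(ℝ³)}. -/

import Mathlib

open MeasureTheory Real
open scoped FourierTransform SchwartzMap
noncomputable section
abbrev V := EuclideanSpace ℝ (Fin 3)
/-- Japanese bracket `⟨v⟩ = (1+|v|²)^{1/2}`. -/
def jb (v : V) : ℝ := (1 + ‖v‖^2) ^ ((1:ℝ)/2)
/-- `L²` norm. -/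
def l2norm (f : V → ℂ) : ℝ := (∫ v, ‖f v‖^2) ^ ((1:ℝ)/2)
/-- Sobolev `H^k` norm defined via the Fourier transform. -/
def Hnorm (k : ℝ) (f : V → ℂ) : ℝ := (∫ ξ, (jb ξ)^(2*k) * ‖𝓕 f ξ‖^2) ^ ((1:ℝ)/2)
/-- Weighted Sobolev norm `‖u‖_{H^k_l} = ‖⟨·⟩^l u‖_{H^k}`. -/
def HnormW (k l : ℝ) (f : V → ℂ) : ℝ := Hnorm k (fun v => ((jb v ^ l : ℝ) : ℂ) * f v)
/-- The Fourier multiplier `(1-Δ)^{r/2} = ⟨D⟩^r` with symbol `(1+|ξ|²)^{r/2}`. -/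
def besselOp (r : ℝ) (f : V → ℂ) : V → ℂ :=
  fun v => 𝓕⁻ (fun ξ => (((1 + ‖ξ‖^2) ^ (r/2) : ℝ) : ℂ) * 𝓕 f ξ) v

/-!
Let the exponents of both brackets in `⟨ξ⟩^k 𝓕 ⟨x⟩^l f` depend affinely on a complex variable `z`
in the strip `0 ≤ re z ≤ 1`. Paired with a Schwartz function, this gives a bounded holomorphic
function of `z`, and the three lines theorem bounds its value at `θ` by the norms on the two
boundary lines, provided these grow at most polynomially. On a boundary line the imaginary part
of the exponent of `⟨ξ⟩` is invisible to the `L²` norm, while that of `⟨x⟩` acts as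
multiplication by `⟨x⟩^{iτ}`, whose derivatives are polynomial in `τ`. Multiplication by a function
with bounded derivatives is bounded on `H^s`: for `s ∈ ℕ` by the Leibniz rule, for `s ≥ 0` by
interpolation between `0` and an integer, with the same three lines argument, and for `s < 0` by
duality. The bilinear inequality is the midpoint `θ = 1/2`.
-/

namespace WeightedSobolev

open scoped ContDiff LineDeriv Nat

section Bracket

variable {E : Type*} [NormedAddCommGroup E]

/-- `log ⟨x⟩`, the logarithm of the Japanese bracket `⟨x⟩ = (1 + ‖x‖²)^{1/2}`. -/
def logBracket (x : E) : ℝ := log (1 + ‖x‖ ^ 2) / 2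

/-- The complex power `⟨x⟩^z` of the Japanese bracket. It is written as an exponential because
that makes the dependence on both `z` and `x` transparent. -/
def bracketPow (z : ℂ) (x : E) : ℂ := Complex.exp (z * logBracket x)

lemma logBracket_nonneg (x : E) : 0 ≤ logBracket x :=
  div_nonneg (log_nonneg (by nlinarith [sq_nonneg ‖x‖])) zero_le_two

lemma exp_logBracket_sq (x : E) : rexp (logBracket x) ^ 2 = 1 + ‖x‖ ^ 2 := by
  rw [← exp_nat_mul, logBracket, Nat.cast_ofNat, mul_div_cancel₀ _ (two_ne_zero' ℝ),
    exp_log (by positivity)]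

lemma exp_logBracket_le (x : E) : rexp (logBracket x) ≤ 1 + ‖x‖ :=
  le_of_sq_le_sq (by nlinarith [exp_logBracket_sq x, norm_nonneg x]) (by positivity)

lemma norm_bracketPow (z : ℂ) (x : E) : ‖bracketPow z x‖ = rexp (z.re * logBracket x) := by
  simp [bracketPow, Complex.norm_exp]

lemma norm_bracketPow_le_of_re_le {z w : ℂ} (h : z.re ≤ w.re) (x : E) :
    ‖bracketPow z x‖ ≤ ‖bracketPow w x‖ := by
  simpa only [norm_bracketPow] using
    exp_le_exp.2 (mul_le_mul_of_nonneg_right h (logBracket_nonneg x))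

@[simp]
lemma bracketPow_zero : (bracketPow 0 : E → ℂ) = fun _ ↦ 1 := by
  ext x; simp [bracketPow]

lemma bracketPow_add (z w : ℂ) : (bracketPow (z + w) : E → ℂ) = bracketPow z * bracketPow w := by
  ext x; simp [bracketPow, add_mul, Complex.exp_add]

lemma bracketPow_ofReal (s : ℝ) (x : E) :
    bracketPow (s : ℂ) x = (((1 + ‖x‖ ^ 2) ^ (s / 2) : ℝ) : ℂ) := by
  rw [bracketPow, rpow_def_of_pos (by positivity), logBracket, ← Complex.ofReal_mul,
    ← Complex.ofReal_exp]
  ring_nf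

lemma star_bracketPow (z : ℂ) (x : E) : star (bracketPow z x) = bracketPow (star z) x := by
  simp [bracketPow, ← Complex.exp_conj]

lemma norm_iteratedFDeriv_const_add {G : Type*} [NormedAddCommGroup G] [NormedSpace ℝ G]
    [NormedSpace ℝ E] {i : ℕ} (hi : 1 ≤ i) (c : G) (f : E → G) (x : E) :
    ‖iteratedFDeriv ℝ i (fun y ↦ c + f y) x‖ = ‖iteratedFDeriv ℝ i f x‖ := by
  obtain ⟨j, rfl⟩ := Nat.exists_eq_add_of_le' hi
  rw [← norm_iteratedFDeriv_fderiv, ← norm_iteratedFDeriv_fderiv]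
  congr 2
  ext1 y
  exact fderiv_const_add c

variable [InnerProductSpace ℝ E]

lemma norm_iteratedFDeriv_norm_sq_le {i : ℕ} (hi : 1 ≤ i) (x : E) :
    ‖iteratedFDeriv ℝ i (fun y : E ↦ ‖y‖ ^ 2) x‖ ≤ 2 * (1 + ‖x‖ ^ 2) := by
  let B : E →L[ℝ] E →L[ℝ] ℝ := (2 : ℝ) • innerSL ℝ
  have hfderiv : fderiv ℝ (fun y : E ↦ ‖y‖ ^ 2) = B := by
    ext1 y
    rw [fderiv_norm_sq_apply, ← Nat.cast_smul_eq_nsmul ℝ]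
    rfl
  have hfderivB : fderiv ℝ B = fun _ ↦ B := by
    ext1 y; exact ContinuousLinearMap.fderiv B
  have hB (y : E) : ‖B y‖ = 2 * ‖y‖ := by
    change ‖(2 : ℝ) • innerSL ℝ y‖ = 2 * ‖y‖
    rw [norm_smul, norm_two, innerSL_apply_norm]
  obtain ⟨j, rfl⟩ := Nat.exists_eq_add_of_le' hi
  rw [← norm_iteratedFDeriv_fderiv, hfderiv]
  match j with
  | 0 =>
    rw [norm_iteratedFDeriv_zero, hB]
    nlinarith [sq_nonneg (‖x‖ - 1)]
  | 1 =>
    rw [← norm_iteratedFDeriv_fderiv, norm_iteratedFDeriv_zero, hfderivB]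
    calc ‖B‖ ≤ 2 := B.opNorm_le_bound zero_le_two fun y ↦ (hB y).le
      _ ≤ 2 * (1 + ‖x‖ ^ 2) := by nlinarith [sq_nonneg ‖x‖]
  | k + 2 =>
    rw [← norm_iteratedFDeriv_fderiv, hfderivB, iteratedFDeriv_succ_const, Pi.zero_apply,
      norm_zero]
    positivity

lemma contDiff_logBracket : ContDiff ℝ ∞ (logBracket : E → ℝ) :=
  ((contDiff_const.add (contDiff_norm_sq ℝ)).log fun x ↦ by positivity).div_const 2

-- Near a point `x`, `log ⟨y⟩` is a constant plus `½ log ((1 + ‖y‖²) / (1 + ‖x‖²))`, a fixed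
-- function of a quantity that is `1` at `x` and whose derivatives there are bounded.
lemma exists_norm_iteratedFDeriv_logBracket_le (n : ℕ) :
    ∃ D : ℝ, 1 ≤ D ∧ ∀ i, 1 ≤ i → i ≤ n → ∀ x : E, ‖iteratedFDeriv ℝ i logBracket x‖ ≤ D := by
  let g : ℝ → ℝ := fun s ↦ log s / 2
  let C : ℝ := ∑ i ∈ Finset.range (n + 1), ‖iteratedFDerivWithin ℝ i g (Set.Ioi 0) 1‖
  have hC : 0 ≤ C := Finset.sum_nonneg fun i _ ↦ norm_nonneg _
  have hg : ContDiffOn ℝ ∞ g (Set.Ioi 0) :=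
    (contDiffOn_id.log fun s hs ↦ (Set.mem_Ioi.1 hs).ne').div_const 2
  have hn : 0 ≤ (n ! : ℝ) * C * 2 ^ n := by positivity
  refine ⟨n ! * C * 2 ^ n + 1, by linarith, fun i hi hin x ↦ ?_⟩
  let f : E → ℝ := fun y ↦ (1 + ‖x‖ ^ 2)⁻¹ • (1 + ‖y‖ ^ 2)
  have hf_pos (y : E) : 0 < f y := by simp only [f, smul_eq_mul]; positivity
  have hfx : f x = 1 := inv_mul_cancel₀ (by positivity)
  have hp : ContDiff ℝ ∞ fun y : E ↦ 1 + ‖y‖ ^ 2 := contDiff_const.add (contDiff_norm_sq ℝ)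
  have hsplit : (logBracket : E → ℝ) = (fun _ ↦ log (1 + ‖x‖ ^ 2) / 2) + g ∘ f := by
    ext y
    have := log_mul (x := (1 + ‖x‖ ^ 2)⁻¹) (y := 1 + ‖y‖ ^ 2) (by positivity) (by positivity)
    simp only [logBracket, Pi.add_apply, Function.comp_apply, f, g, smul_eq_mul, this, log_inv]
    ring
  have hf_le (j : ℕ) (hj : 1 ≤ j) (_ : j ≤ i) : ‖iteratedFDeriv ℝ j f x‖ ≤ 2 ^ j := by
    rw [iteratedFDeriv_const_smul_apply' (hp.of_le (mod_cast le_top)).contDiffAt, norm_smul,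
      norm_iteratedFDeriv_const_add hj, norm_inv, norm_of_nonneg (by positivity),
      inv_mul_le_iff₀ (by positivity)]
    calc _ ≤ 2 * (1 + ‖x‖ ^ 2) := norm_iteratedFDeriv_norm_sq_le hj x
      _ ≤ (1 + ‖x‖ ^ 2) * 2 ^ j := by
        rw [mul_comm]; gcongr; exact le_self_pow₀ one_le_two (by lia)
  have hg_le (j : ℕ) (hj : j ≤ i) : ‖iteratedFDerivWithin ℝ j g (Set.Ioi 0) (f x)‖ ≤ C := by
    rw [hfx]
    exact Finset.single_le_sum (f := fun j ↦ ‖iteratedFDerivWithin ℝ j g (Set.Ioi 0) 1‖)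
      (fun _ _ ↦ norm_nonneg _) (Finset.mem_range.2 (by lia))
  calc ‖iteratedFDeriv ℝ i logBracket x‖ = ‖iteratedFDeriv ℝ i (g ∘ f) x‖ := by
        rw [hsplit]; exact norm_iteratedFDeriv_const_add hi _ _ x
    _ ≤ i ! * C * 2 ^ i :=
        norm_iteratedFDeriv_comp_le' (Set.range_subset_iff.2 hf_pos) (uniqueDiffOn_Ioi 0) hg
          (hp.const_smul _) (mod_cast le_top) x hg_le hf_le
    _ ≤ n ! * C * 2 ^ n + 1 := by
        refine le_add_of_le_of_nonneg ?_ zero_le_one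
        gcongr
        exact one_le_two

lemma iteratedDeriv_cexp_mul_ofReal (n : ℕ) (z : ℂ) :
    iteratedDeriv n (fun t : ℝ ↦ Complex.exp (z * t)) =
      fun t : ℝ ↦ z ^ n * Complex.exp (z * t) := by
  induction n with
  | zero => simp
  | succ n ih =>
    ext t
    have h : HasDerivAt (fun t : ℝ ↦ Complex.exp (z * t)) (Complex.exp (z * t) * (z * 1)) t :=
      ((Complex.ofRealCLM.hasDerivAt (x := t)).const_mul z).cexp
    rw [iteratedDeriv_succ, ih, (h.const_mul (z ^ n)).deriv]
    ring

lemma contDiff_bracketPow (z : ℂ) : ContDiff ℝ ∞ (bracketPow z : E → ℂ) :=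
  (contDiff_const.mul (Complex.ofRealCLM.contDiff.comp contDiff_logBracket)).cexp

lemma exists_norm_iteratedFDeriv_bracketPow_le (n : ℕ) :
    ∃ C : ℝ, 0 ≤ C ∧ ∀ (z : ℂ), ∀ i ≤ n, ∀ x : E,
      ‖iteratedFDeriv ℝ i (bracketPow z) x‖ ≤ C * (1 + ‖z‖) ^ n * ‖bracketPow z x‖ := by
  obtain ⟨D, hD, hL⟩ := exists_norm_iteratedFDeriv_logBracket_le (E := E) n
  refine ⟨n ! * D ^ n, by positivity, fun z i hi x ↦ ?_⟩
  let g : ℝ → ℂ := fun t ↦ Complex.exp (z * t)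
  have hg : ContDiff ℝ ∞ g := (contDiff_const.mul Complex.ofRealCLM.contDiff).cexp
  have hg_le (j : ℕ) (hj : j ≤ i) :
      ‖iteratedFDeriv ℝ j g (logBracket x)‖ ≤ (1 + ‖z‖) ^ n * ‖bracketPow z x‖ := by
    rw [norm_iteratedFDeriv_eq_norm_iteratedDeriv, iteratedDeriv_cexp_mul_ofReal, norm_mul,
      norm_pow]
    refine mul_le_mul_of_nonneg_right ?_ (norm_nonneg _)
    calc ‖z‖ ^ j ≤ (1 + ‖z‖) ^ j := by gcongr; linarith
      _ ≤ (1 + ‖z‖) ^ n := pow_le_pow_right₀ (by linarith [norm_nonneg z]) (by lia)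
  calc ‖iteratedFDeriv ℝ i (g ∘ logBracket) x‖
      ≤ i ! * ((1 + ‖z‖) ^ n * ‖bracketPow z x‖) * D ^ i :=
        norm_iteratedFDeriv_comp_le hg contDiff_logBracket (mod_cast le_top) x hg_le
          fun j hj hji ↦ (hL j hj (hji.trans hi) x).trans (le_self_pow₀ hD (by lia))
    _ ≤ n ! * ((1 + ‖z‖) ^ n * ‖bracketPow z x‖) * D ^ n := by gcongr
    _ = n ! * D ^ n * (1 + ‖z‖) ^ n * ‖bracketPow z x‖ := by ring

@[fun_prop]
lemma hasTemperateGrowth_bracketPow (z : ℂ) : (bracketPow z : E → ℂ).HasTemperateGrowth := by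
  refine ⟨contDiff_bracketPow z, fun n ↦ ?_⟩
  obtain ⟨C, hC, hbound⟩ := exists_norm_iteratedFDeriv_bracketPow_le (E := E) n
  obtain ⟨m, hm⟩ := exists_nat_ge z.re
  refine ⟨m, C * (1 + ‖z‖) ^ n, fun x ↦ (hbound z n le_rfl x).trans ?_⟩
  have hre : z.re ≤ ((m : ℂ)).re := by simpa using hm
  gcongr
  calc ‖bracketPow z x‖ ≤ ‖bracketPow (m : ℂ) x‖ := norm_bracketPow_le_of_re_le hre x
    _ = rexp (logBracket x) ^ m := by rw [norm_bracketPow, Complex.natCast_re, exp_nat_mul]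
    _ ≤ (1 + ‖x‖) ^ m := by gcongr; exact exp_logBracket_le x

@[fun_prop]
lemma hasTemperateGrowth_logBracket : (logBracket : E → ℝ).HasTemperateGrowth := by
  refine ⟨contDiff_logBracket, fun n ↦ ?_⟩
  obtain ⟨D, hD, hL⟩ := exists_norm_iteratedFDeriv_logBracket_le (E := E) n
  refine ⟨1, D, fun x ↦ ?_⟩
  rcases n.eq_zero_or_pos with rfl | hn
  · rw [norm_iteratedFDeriv_zero, norm_of_nonneg (logBracket_nonneg x), pow_one]
    nlinarith [add_one_le_exp (logBracket x), exp_logBracket_le x, norm_nonneg x]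
  · calc _ ≤ D := hL n hn le_rfl x
      _ ≤ D * (1 + ‖x‖) ^ 1 := by nlinarith [norm_nonneg x]

end Bracket

section WeightedSpaces

open SchwartzMap

variable {E F : Type*} [NormedAddCommGroup E] [InnerProductSpace ℝ E]
  [NormedAddCommGroup F] [InnerProductSpace ℂ F]

/-- Multiplication of a Schwartz function by the weight `⟨x⟩^z`. -/
def weight (z : ℂ) : 𝓢(E, F) →L[ℂ] 𝓢(E, F) := smulLeftCLM F (bracketPow z)

lemma weight_apply (z : ℂ) (f : 𝓢(E, F)) (x : E) : weight z f x = bracketPow z x • f x :=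
  smulLeftCLM_apply_apply (hasTemperateGrowth_bracketPow z) f x

@[simp]
lemma weight_zero (f : 𝓢(E, F)) : weight 0 f = f := by
  ext x; simp [weight_apply]

lemma weight_weight (z w : ℂ) (f : 𝓢(E, F)) : weight z (weight w f) = weight (z + w) f := by
  ext x; simp [weight_apply, bracketPow_add, mul_smul]

variable [FiniteDimensional ℝ E] [MeasurableSpace E] [BorelSpace E]

lemma norm_toLp_sq (f : 𝓢(E, F)) : ‖f.toLp 2‖ ^ 2 = ∫ x, ‖f x‖ ^ 2 := by
  rw [norm_toLp' two_ne_zero ENNReal.ofNat_ne_top, ENNReal.toReal_ofNat, ← rpow_natCast,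
    ← rpow_mul (by positivity)]
  simp

lemma norm_toLp_le_of_norm_le {f g : 𝓢(E, F)} {c : ℝ} (h : ∀ x, ‖f x‖ ≤ c * ‖g x‖) :
    ‖f.toLp 2‖ ≤ c * ‖g.toLp 2‖ := by
  refine Lp.norm_le_mul_norm_of_ae_le_mul ?_
  filter_upwards [f.coeFn_toLp 2 volume, g.coeFn_toLp 2 volume] with x hf hg
  rw [hf, hg]
  exact h x

lemma inner_toLp_smulLeftCLM_left {a b : E → ℂ} (ha : a.HasTemperateGrowth)
    (hb : b.HasTemperateGrowth) (hab : ∀ x, star (a x) = b x) (f g : 𝓢(E, F)) :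
    inner ℂ ((smulLeftCLM F a f).toLp 2) (g.toLp 2) =
      inner ℂ (f.toLp 2) ((smulLeftCLM F b g).toLp 2) := by
  simp only [inner_toL2_toL2_eq, smulLeftCLM_apply_apply ha, smulLeftCLM_apply_apply hb,
    inner_smul_left, inner_smul_right, ← hab, starRingEnd_apply]

lemma inner_weight_left (z : ℂ) (f g : 𝓢(E, F)) :
    inner ℂ ((weight z f).toLp 2) (g.toLp 2) =
      inner ℂ (f.toLp 2) ((weight (star z) g).toLp 2) :=
  inner_toLp_smulLeftCLM_left (hasTemperateGrowth_bracketPow z)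
    (hasTemperateGrowth_bracketPow (star z)) (star_bracketPow z) f g

lemma norm_weight_le_of_re_le {z w : ℂ} (h : z.re ≤ w.re) (f : 𝓢(E, F)) :
    ‖(weight z f).toLp 2‖ ≤ ‖(weight w f).toLp 2‖ := by
  refine (norm_toLp_le_of_norm_le fun x ↦ ?_).trans_eq (one_mul _)
  rw [one_mul, weight_apply, weight_apply, norm_smul, norm_smul]
  gcongr
  exact norm_bracketPow_le_of_re_le h x

lemma norm_weight_eq_of_re_eq {z w : ℂ} (h : z.re = w.re) (f : 𝓢(E, F)) :
    ‖(weight z f).toLp 2‖ = ‖(weight w f).toLp 2‖ :=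
  (norm_weight_le_of_re_le h.le f).antisymm (norm_weight_le_of_re_le h.ge f)

end WeightedSpaces

section HolomorphicWeights

open SchwartzMap

lemma hasDerivAt_inner_conj {H : Type*} [NormedAddCommGroup H] [InnerProductSpace ℂ H]
    {f g : ℂ → H} {f' g' : H} {z : ℂ} (hf : HasDerivAt f f' (star z)) (hg : HasDerivAt g g' z) :
    HasDerivAt (fun w ↦ inner ℂ (f (star w)) (g w))
      (inner ℂ (f (star z)) g' + inner ℂ f' (g z)) z := by
  have hconj : HasFDerivAt (fun w : ℂ ↦ star w) (Complex.conjCLE : ℂ →L[ℝ] ℂ) z :=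
    Complex.conjCLE.hasFDerivAt
  have hreal := (HasFDerivAt.comp z (hf.hasFDerivAt.restrictScalars ℝ) hconj).inner ℂ
    (hg.hasFDerivAt.restrictScalars ℝ)
  refine hasDerivAt_iff_hasFDerivAt.2 (hasFDerivAt_of_restrictScalars ℝ hreal ?_)
  ext w
  simp [fderivInnerCLM_apply, inner_smul_left, inner_smul_right, mul_add]

lemma norm_bracketPow_add_sub_sub_le {E : Type*} [NormedAddCommGroup E] {h : ℂ} (hh : ‖h‖ ≤ 1)
    (z : ℂ) (x : E) :
    ‖bracketPow (z + h) x - bracketPow z x - h * logBracket x * bracketPow z x‖ ≤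
      ‖h‖ ^ 2 * ‖bracketPow (z + 3) x‖ := by
  set L := logBracket x
  have hL : 0 ≤ L := logBracket_nonneg x
  have hexp : ‖Complex.exp (h * L) - 1 - h * L‖ ≤ ‖h * L‖ ^ 2 * rexp ‖h * L‖ := by
    simpa [Finset.sum_range_succ, sub_sub] using
      Complex.norm_exp_sub_sum_le_norm_mul_exp (h * L) 2
  have hnorm : ‖h * L‖ = ‖h‖ * L := by rw [norm_mul, Complex.norm_of_nonneg hL]
  have hsq : L ^ 2 ≤ rexp (2 * L) := by
    rw [two_mul, exp_add, ← sq]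
    gcongr
    linarith [add_one_le_exp L]
  calc ‖bracketPow (z + h) x - bracketPow z x - h * L * bracketPow z x‖
      = ‖bracketPow z x‖ * ‖Complex.exp (h * L) - 1 - h * L‖ := by
        rw [bracketPow_add, ← norm_mul, Pi.mul_apply]
        congr 1
        rw [show bracketPow h x = Complex.exp (h * L) from rfl]
        ring
    _ ≤ ‖bracketPow z x‖ * ((‖h‖ * L) ^ 2 * rexp (1 * L)) := by
        rw [hnorm] at hexp
        refine mul_le_mul_of_nonneg_left (hexp.trans ?_) (norm_nonneg _)
        gcongr
    _ ≤ ‖bracketPow z x‖ * (‖h‖ ^ 2 * (rexp (2 * L) * rexp (1 * L))) := by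
        rw [mul_pow, mul_assoc (‖h‖ ^ 2)]
        gcongr
    _ = ‖h‖ ^ 2 * ‖bracketPow (z + 3) x‖ := by
        rw [norm_bracketPow, norm_bracketPow, ← exp_add, mul_left_comm, ← exp_add]
        simp only [Complex.add_re, Complex.re_ofNat]
        ring_nf
        rfl

variable {E F : Type*} [NormedAddCommGroup E] [InnerProductSpace ℝ E] [FiniteDimensional ℝ E]
  [MeasurableSpace E] [BorelSpace E] [NormedAddCommGroup F] [InnerProductSpace ℂ F]

lemma hasDerivAt_map_weight {H : Type*} [NormedAddCommGroup H] [NormedSpace ℂ H]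
    (A : 𝓢(E, F) →ₗ[ℂ] H) {C : ℝ} (hC : 0 ≤ C)
    (hA : ∀ f, ‖A f‖ ≤ C * ‖f.toLp 2‖) (g : 𝓢(E, F)) (z : ℂ) :
    HasDerivAt (fun w ↦ A (weight w g))
      (A (weight z (smulLeftCLM F (fun x ↦ (logBracket x : ℂ)) g))) z := by
  have hlog : (fun x : E ↦ (logBracket x : ℂ)).HasTemperateGrowth := by fun_prop
  set L : 𝓢(E, F) →L[ℂ] 𝓢(E, F) := smulLeftCLM F fun x ↦ (logBracket x : ℂ)
  have hbound (h : ℂ) (hh : ‖h‖ ≤ 1) :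
      ‖A (weight (z + h) g) - A (weight z g) - h • A (weight z (L g))‖ ≤
        C * (‖h ^ 2‖ * ‖(weight (z + 3) g).toLp 2‖) := by
    rw [← map_sub, ← map_smul, ← map_sub]
    refine (hA _).trans (mul_le_mul_of_nonneg_left (norm_toLp_le_of_norm_le fun x ↦ ?_) hC)
    have hfactor : (weight (z + h) g - weight z g - h • weight z (L g)) x =
        (bracketPow (z + h) x - bracketPow z x - h * logBracket x * bracketPow z x) • g x := by
      simp only [sub_apply, smul_apply, weight_apply, L, smulLeftCLM_apply_apply hlog, smul_smul,
        sub_smul]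
      ring_nf
    rw [hfactor, norm_smul, weight_apply, norm_smul, norm_pow, ← mul_assoc]
    exact mul_le_mul_of_nonneg_right (norm_bracketPow_add_sub_sub_le hh z x) (norm_nonneg _)
  refine hasDerivAt_iff_isLittleO_nhds_zero.2 <| Asymptotics.IsBigO.trans_isLittleO
    (.of_bound (C * ‖(weight (z + 3) g).toLp 2‖) ?_) (Asymptotics.isLittleO_pow_id one_lt_two)
  filter_upwards [Metric.closedBall_mem_nhds (0 : ℂ) one_pos] with h hh
  exact (hbound h (mem_closedBall_zero_iff.1 hh)).trans_eq (by ring)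

end HolomorphicWeights

section ThreeLines

lemma ofReal_lineMap (p q θ : ℝ) :
    ((AffineMap.lineMap p q θ : ℝ) : ℂ) = AffineMap.lineMap (p : ℂ) (q : ℂ) (θ : ℂ) := by
  simp [AffineMap.lineMap_apply]

lemma star_lineMap_ofReal (p q : ℝ) (z : ℂ) :
    star (AffineMap.lineMap (p : ℂ) (q : ℂ) z) = AffineMap.lineMap (p : ℂ) (q : ℂ) (star z) := by
  simp [AffineMap.lineMap_apply]

lemma re_lineMap_ofReal (p q : ℝ) (z : ℂ) :
    (AffineMap.lineMap (p : ℂ) (q : ℂ) z).re = AffineMap.lineMap p q z.re := by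
  simp [AffineMap.lineMap_apply]

lemma le_of_sq_le_mul {x y : ℝ} (hy : 0 ≤ y) (h : x ^ 2 ≤ x * y) : x ≤ y := by
  by_contra! hlt
  nlinarith

lemma rpow_one_sub_mul_rpow {c θ : ℝ} (hc : 0 ≤ c) (hθ : θ ∈ Set.Icc (0 : ℝ) 1) :
    c ^ (1 - θ) * c ^ θ = c := by
  rw [← rpow_add_of_nonneg hc (sub_nonneg.2 hθ.2) hθ.1, sub_add_cancel, rpow_one]

lemma mul_rpow_mul_mul_rpow {a b c θ : ℝ} (ha : 0 ≤ a) (hb : 0 ≤ b) (hc : 0 ≤ c)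
    (hθ : θ ∈ Set.Icc (0 : ℝ) 1) :
    (c * a) ^ (1 - θ) * (c * b) ^ θ = c * (a ^ (1 - θ) * b ^ θ) := by
  rw [mul_rpow hc ha, mul_rpow hc hb, mul_mul_mul_comm, rpow_one_sub_mul_rpow hc hθ]

lemma norm_cexp_sq_mul_pow_le {z : ℂ} (hz : |z.re| ≤ 1) (N : ℕ) :
    ‖Complex.exp (z ^ 2)‖ * (1 + |z.im|) ^ N ≤ N ! * rexp 3 := by
  have hre : (z ^ 2).re = z.re ^ 2 - z.im ^ 2 := by simp [sq]
  have hpow : (1 + |z.im|) ^ N ≤ N ! * rexp (1 + |z.im|) := by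
    rw [mul_comm, ← div_le_iff₀ (by positivity)]
    exact pow_div_factorial_le_exp _ (by positivity) N
  calc ‖Complex.exp (z ^ 2)‖ * (1 + |z.im|) ^ N
      ≤ rexp (z.re ^ 2 - z.im ^ 2) * (N ! * rexp (1 + |z.im|)) := by
        rw [Complex.norm_exp, hre]
        gcongr
    _ = N ! * rexp (z.re ^ 2 - z.im ^ 2 + (1 + |z.im|)) := by
        rw [exp_add (z.re ^ 2 - z.im ^ 2)]
        ring
    _ ≤ N ! * rexp 3 := by
        gcongr
        nlinarith [sq_abs z.re, sq_abs z.im, abs_nonneg z.re, sq_nonneg (2 * |z.im| - 1)]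

-- The factor `exp ((z - θ)²)` equals `1` at `θ` and absorbs the growth on the two lines.
lemma norm_le_of_polynomial_growth_on_lines {f : ℂ → ℂ} (hf : Differentiable ℂ f)
    {M : ℝ} (hM : ∀ z, z.re ∈ Set.Icc (0 : ℝ) 1 → ‖f z‖ ≤ M) {a b : ℝ} {N : ℕ}
    (h₀ : ∀ z, z.re = 0 → ‖f z‖ ≤ a * (1 + |z.im|) ^ N)
    (h₁ : ∀ z, z.re = 1 → ‖f z‖ ≤ b * (1 + |z.im|) ^ N)
    {θ : ℝ} (hθ : θ ∈ Set.Icc (0 : ℝ) 1) :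
    ‖f θ‖ ≤ N ! * rexp 3 * (a ^ (1 - θ) * b ^ θ) := by
  let g : ℂ → ℂ := fun z ↦ f z * Complex.exp ((z - θ) ^ 2)
  have hg : Differentiable ℂ g := by fun_prop
  have ha : 0 ≤ a := by simpa using (norm_nonneg _).trans (h₀ 0 rfl)
  have hb : 0 ≤ b := by simpa using (norm_nonneg _).trans (h₁ 1 rfl)
  have hK : 0 ≤ N ! * rexp 3 := by positivity
  have hexp (z : ℂ) (hz : z.re ∈ Set.Icc (0 : ℝ) 1) (n : ℕ) :
      ‖Complex.exp ((z - θ) ^ 2)‖ * (1 + |z.im|) ^ n ≤ n ! * rexp 3 := by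
    have hdist : |(z - θ).re| ≤ 1 := by
      rw [Complex.sub_re, Complex.ofReal_re]
      exact abs_le.2 ⟨by linarith [hz.1, hθ.2], by linarith [hz.2, hθ.1]⟩
    simpa using norm_cexp_sq_mul_pow_le hdist n
  have hline {c : ℝ} (hc : 0 ≤ c) (z : ℂ) (hz : z.re ∈ Set.Icc (0 : ℝ) 1)
      (hfz : ‖f z‖ ≤ c * (1 + |z.im|) ^ N) : ‖g z‖ ≤ N ! * rexp 3 * c := by
    calc ‖g z‖ ≤ c * (1 + |z.im|) ^ N * ‖Complex.exp ((z - θ) ^ 2)‖ := by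
          rw [norm_mul]; gcongr
      _ = ‖Complex.exp ((z - θ) ^ 2)‖ * (1 + |z.im|) ^ N * c := by ring
      _ ≤ N ! * rexp 3 * c := mul_le_mul_of_nonneg_right (hexp z hz N) hc
  have hbdd : BddAbove ((norm ∘ g) '' Complex.HadamardThreeLines.verticalClosedStrip 0 1) := by
    refine ⟨M * rexp 3, Set.forall_mem_image.2 fun z hz ↦ ?_⟩
    have hexp₀ : ‖Complex.exp ((z - θ) ^ 2)‖ ≤ rexp 3 := by simpa using hexp z hz 0
    exact (norm_mul_le _ _).trans
      (mul_le_mul (hM z hz) hexp₀ (norm_nonneg _) ((norm_nonneg _).trans (hM z hz)))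
  calc ‖f θ‖ = ‖g θ‖ := by simp [g]
    _ ≤ (N ! * rexp 3 * a) ^ (1 - θ) * (N ! * rexp 3 * b) ^ θ := by
        simpa using Complex.HadamardThreeLines.norm_le_interp_of_mem_verticalClosedStrip₀₁' g
          (z := θ) hθ hg.diffContOnCl hbdd
          (fun z (hz : z.re = 0) ↦ hline ha z (by simp [hz]) (h₀ z hz))
          (fun z (hz : z.re = 1) ↦ hline hb z (by simp [hz]) (h₁ z hz))
    _ = N ! * rexp 3 * (a ^ (1 - θ) * b ^ θ) := mul_rpow_mul_mul_rpow ha hb hK hθ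

end ThreeLines

section Stein

open SchwartzMap

variable {E F : Type*} [NormedAddCommGroup E] [InnerProductSpace ℝ E] [NormedAddCommGroup F]
  [InnerProductSpace ℂ F]

/-- The analytic family of operators `⟨x⟩^κ(z) T ⟨x⟩^λ(z)` to which Stein interpolation is applied,
where the affine functions `κ` and `λ` take the values `k₀`, `l₀` at `0` and `k₁`, `l₁` at `1`. -/
def steinFamily (T : 𝓢(E, F) →ₗ[ℂ] 𝓢(E, F)) (k₀ k₁ l₀ l₁ : ℝ) (z : ℂ) (g : 𝓢(E, F)) : 𝓢(E, F) :=
  weight (AffineMap.lineMap (k₀ : ℂ) (k₁ : ℂ) z)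
    (T (weight (AffineMap.lineMap (l₀ : ℂ) (l₁ : ℂ) z) g))

lemma steinFamily_ofReal (T : 𝓢(E, F) →ₗ[ℂ] 𝓢(E, F)) (k₀ k₁ l₀ l₁ θ : ℝ) (g : 𝓢(E, F)) :
    steinFamily T k₀ k₁ l₀ l₁ θ g =
      weight (AffineMap.lineMap k₀ k₁ θ : ℝ) (T (weight (AffineMap.lineMap l₀ l₁ θ : ℝ) g)) := by
  rw [steinFamily, ofReal_lineMap, ofReal_lineMap]

variable [FiniteDimensional ℝ E] [MeasurableSpace E] [BorelSpace E]

lemma norm_weight_lineMap_le {p q : ℝ} {z : ℂ} (hz : z.re ∈ Set.Icc (0 : ℝ) 1) (f : 𝓢(E, F)) :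
    ‖(weight (AffineMap.lineMap (p : ℂ) (q : ℂ) z) f).toLp 2‖ ≤
      ‖(weight (max p q : ℝ) f).toLp 2‖ := by
  refine norm_weight_le_of_re_le ?_ f
  rw [re_lineMap_ofReal, Complex.ofReal_re]
  exact (convex_Iic (max p q)).lineMap_mem (le_max_left p q) (le_max_right p q) hz

lemma differentiable_toLp_map_weight_lineMap (T : 𝓢(E, F) →ₗ[ℂ] 𝓢(E, F)) {K : ℝ} (hK : 0 ≤ K)
    (hT : ∀ f, ‖(T f).toLp 2‖ ≤ K * ‖f.toLp 2‖) (p q : ℝ) (g : 𝓢(E, F)) :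
    Differentiable ℂ fun z : ℂ ↦
      (T (weight (AffineMap.lineMap (p : ℂ) (q : ℂ) z) g)).toLp 2 := fun z ↦
  (hasDerivAt_map_weight ((toLpCLM ℂ F 2 volume).toLinearMap ∘ₗ T) hK hT g _).differentiableAt.comp
    z AffineMap.hasDerivAt_lineMap.differentiableAt

lemma norm_inner_steinFamily_le (T : 𝓢(E, F) →ₗ[ℂ] 𝓢(E, F)) {K : ℝ} (hK : 0 ≤ K)
    (hT : ∀ f, ‖(T f).toLp 2‖ ≤ K * ‖f.toLp 2‖) {k₀ k₁ l₀ l₁ a b : ℝ} {N : ℕ} {g : 𝓢(E, F)}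
    (h₀ : ∀ z, z.re = 0 → ‖(steinFamily T k₀ k₁ l₀ l₁ z g).toLp 2‖ ≤ a * (1 + |z.im|) ^ N)
    (h₁ : ∀ z, z.re = 1 → ‖(steinFamily T k₀ k₁ l₀ l₁ z g).toLp 2‖ ≤ b * (1 + |z.im|) ^ N)
    {θ : ℝ} (hθ : θ ∈ Set.Icc (0 : ℝ) 1) (h : 𝓢(E, F)) :
    ‖inner ℂ (h.toLp 2) ((steinFamily T k₀ k₁ l₀ l₁ θ g).toLp 2)‖ ≤
      N ! * rexp 3 * ((‖h.toLp 2‖ * a) ^ (1 - θ) * (‖h.toLp 2‖ * b) ^ θ) := by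
  let κ : ℂ → ℂ := fun z ↦ AffineMap.lineMap (k₀ : ℂ) (k₁ : ℂ) z
  let μ : ℂ → ℂ := fun z ↦ AffineMap.lineMap (l₀ : ℂ) (l₁ : ℂ) z
  let Φ : ℂ → ℂ := fun z ↦
    inner ℂ ((weight (κ (star z)) h).toLp 2) ((T (weight (μ z) g)).toLp 2)
  have hΦ (z : ℂ) : Φ z = inner ℂ (h.toLp 2) ((steinFamily T k₀ k₁ l₀ l₁ z g).toLp 2) := by
    simp only [Φ, κ]
    rw [inner_weight_left, star_lineMap_ofReal, star_star]
    rfl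
  have hdiff : Differentiable ℂ Φ := fun z ↦ (hasDerivAt_inner_conj
    (differentiable_toLp_map_weight_lineMap LinearMap.id zero_le_one
      (fun f ↦ (one_mul _).ge) k₀ k₁ h (star z)).hasDerivAt
    (differentiable_toLp_map_weight_lineMap T hK hT l₀ l₁ g z).hasDerivAt).differentiableAt
  have hstrip (z : ℂ) (hz : z.re ∈ Set.Icc (0 : ℝ) 1) : ‖Φ z‖ ≤
      ‖(weight (max k₀ k₁ : ℝ) h).toLp 2‖ * (K * ‖(weight (max l₀ l₁ : ℝ) g).toLp 2‖) := by
    refine (norm_inner_le_norm _ _).trans ?_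
    gcongr
    · exact norm_weight_lineMap_le (by simpa using hz) h
    · exact (hT _).trans (mul_le_mul_of_nonneg_left (norm_weight_lineMap_le hz g) hK)
  have hline {c : ℝ} (z : ℂ)
      (hc : ‖(steinFamily T k₀ k₁ l₀ l₁ z g).toLp 2‖ ≤ c * (1 + |z.im|) ^ N) :
      ‖Φ z‖ ≤ ‖h.toLp 2‖ * c * (1 + |z.im|) ^ N := by
    rw [hΦ, mul_assoc]
    exact (norm_inner_le_norm _ _).trans (mul_le_mul_of_nonneg_left hc (norm_nonneg _))
  rw [← hΦ]
  exact norm_le_of_polynomial_growth_on_lines hdiff hstrip (fun z hz ↦ hline z (h₀ z hz))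
    (fun z hz ↦ hline z (h₁ z hz)) hθ

lemma norm_steinFamily_le (T : 𝓢(E, F) →ₗ[ℂ] 𝓢(E, F)) {K : ℝ} (hK : 0 ≤ K)
    (hT : ∀ f, ‖(T f).toLp 2‖ ≤ K * ‖f.toLp 2‖) {k₀ k₁ l₀ l₁ a b : ℝ} {N : ℕ} {g : 𝓢(E, F)}
    (h₀ : ∀ z, z.re = 0 → ‖(steinFamily T k₀ k₁ l₀ l₁ z g).toLp 2‖ ≤ a * (1 + |z.im|) ^ N)
    (h₁ : ∀ z, z.re = 1 → ‖(steinFamily T k₀ k₁ l₀ l₁ z g).toLp 2‖ ≤ b * (1 + |z.im|) ^ N)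
    {θ : ℝ} (hθ : θ ∈ Set.Icc (0 : ℝ) 1) :
    ‖(steinFamily T k₀ k₁ l₀ l₁ θ g).toLp 2‖ ≤ N ! * rexp 3 * (a ^ (1 - θ) * b ^ θ) := by
  have ha : 0 ≤ a := by simpa using (norm_nonneg _).trans (h₀ 0 rfl)
  have hb : 0 ≤ b := by simpa using (norm_nonneg _).trans (h₁ 1 rfl)
  have hG := norm_inner_steinFamily_le T hK hT h₀ h₁ hθ (steinFamily T k₀ k₁ l₀ l₁ θ g)
  set G := (steinFamily T k₀ k₁ l₀ l₁ θ g).toLp 2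
  refine le_of_sq_le_mul (by positivity) ?_
  calc ‖G‖ ^ 2 = ‖inner ℂ G G‖ := by simp [inner_self_eq_norm_sq_to_K]
    _ ≤ N ! * rexp 3 * ((‖G‖ * a) ^ (1 - θ) * (‖G‖ * b) ^ θ) := hG
    _ = ‖G‖ * (N ! * rexp 3 * (a ^ (1 - θ) * b ^ θ)) := by
        rw [mul_rpow_mul_mul_rpow ha hb (norm_nonneg G) hθ, mul_left_comm]

end Stein

section Sobolev

open SchwartzMap

variable {E F : Type*} [NormedAddCommGroup E] [InnerProductSpace ℝ E] [FiniteDimensional ℝ E]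
  [MeasurableSpace E] [BorelSpace E] [NormedAddCommGroup F] [InnerProductSpace ℂ F]

/-- The `H^s` norm of a Schwartz function, with the weight `⟨ξ⟩^s` on the Fourier side. -/
def sobolevNorm (s : ℝ) (f : 𝓢(E, F)) : ℝ := ‖(weight s (𝓕 f)).toLp 2‖

/-- `SobolevBound T s C` says that `T` is bounded by `C` in the `H^s` norm. -/
def SobolevBound (T : 𝓢(E, F) →ₗ[ℂ] 𝓢(E, F)) (s C : ℝ) : Prop :=
  ∀ f, sobolevNorm s (T f) ≤ C * sobolevNorm s f

lemma sobolevNorm_nonneg (s : ℝ) (f : 𝓢(E, F)) : 0 ≤ sobolevNorm s f := norm_nonneg _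

lemma SobolevBound.mono_const {T : 𝓢(E, F) →ₗ[ℂ] 𝓢(E, F)} {s C C' : ℝ} (h : SobolevBound T s C)
    (hC : C ≤ C') : SobolevBound T s C' := fun f ↦
  (h f).trans (mul_le_mul_of_nonneg_right hC (sobolevNorm_nonneg s f))

lemma sobolevNorm_mono {s t : ℝ} (h : s ≤ t) (f : 𝓢(E, F)) : sobolevNorm s f ≤ sobolevNorm t f :=
  norm_weight_le_of_re_le (by simpa using h) _

variable [CompleteSpace F]

lemma sobolevNorm_zero (f : 𝓢(E, F)) : sobolevNorm 0 f = ‖f.toLp 2‖ := by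
  simp [sobolevNorm]

lemma sobolevNorm_fourierInv (s : ℝ) (g : 𝓢(E, F)) :
    sobolevNorm s (𝓕⁻ g) = ‖(weight s g).toLp 2‖ := by
  rw [sobolevNorm, FourierTransform.fourier_fourierInv_eq]

lemma SobolevBound.interpolate {T : 𝓢(E, F) →ₗ[ℂ] 𝓢(E, F)} {s C θ : ℝ} (hC : 0 ≤ C)
    (h₀ : SobolevBound T 0 C) (h₁ : SobolevBound T s C) (hθ : θ ∈ Set.Icc (0 : ℝ) 1) :
    SobolevBound T (θ * s) (rexp 3 * C) := fun f ↦ by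
  let 𝓕ₗ := FourierTransform.fourierEquiv ℂ 𝓢(E, F) (F := 𝓢(E, F))
  let S : 𝓢(E, F) →ₗ[ℂ] 𝓢(E, F) := 𝓕ₗ.toLinearMap ∘ₗ T ∘ₗ 𝓕ₗ.symm.toLinearMap
  have hS {r : ℝ} (h : SobolevBound T r C) (g : 𝓢(E, F)) :
      ‖(weight r (S g)).toLp 2‖ ≤ C * ‖(weight r g).toLp 2‖ :=
    (h (𝓕⁻ g)).trans_eq (by rw [sobolevNorm_fourierInv])
  have hS₀ (g : 𝓢(E, F)) : ‖(S g).toLp 2‖ ≤ C * ‖g.toLp 2‖ := by simpa using hS h₀ g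
  set W := weight (θ * s : ℝ) (𝓕 f)
  have hline {r : ℝ} (h : SobolevBound T r C) (z : ℂ) (hz : z.re * s = r) :
      ‖(steinFamily S 0 s 0 (-s) z W).toLp 2‖ ≤
        C * sobolevNorm (θ * s) f * (1 + |z.im|) ^ 0 := by
    let l : ℂ := AffineMap.lineMap ((0 : ℝ) : ℂ) ((-s : ℝ) : ℂ) z
    have hl : l.re = -r := by simp [l, AffineMap.lineMap_apply, hz]
    calc ‖(steinFamily S 0 s 0 (-s) z W).toLp 2 volume‖
        = ‖(weight r (S (weight l W))).toLp 2 volume‖ :=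
          norm_weight_eq_of_re_eq (by simp [AffineMap.lineMap_apply, hz]) _
      _ ≤ C * ‖(weight r (weight l W)).toLp 2 volume‖ := hS h _
      _ = C * sobolevNorm (θ * s) f * (1 + |z.im|) ^ 0 := by
          rw [weight_weight, weight_weight, pow_zero, mul_one]
          congr 1
          exact norm_weight_eq_of_re_eq (by simp [hl]) _
  have hW : weight (AffineMap.lineMap 0 (-s) θ : ℝ) W = 𝓕 f := by
    rw [weight_weight]
    simp [AffineMap.lineMap_apply]
  have hstein := norm_steinFamily_le S hC hS₀ (fun z hz ↦ hline h₀ z (by simp [hz]))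
    (fun z hz ↦ hline h₁ z (by simp [hz])) hθ
  rw [steinFamily_ofReal, hW, rpow_one_sub_mul_rpow (mul_nonneg hC (sobolevNorm_nonneg _ _)) hθ]
    at hstein
  simpa [sobolevNorm, S, 𝓕ₗ, AffineMap.lineMap_apply, mul_assoc] using hstein

lemma SobolevBound.neg_of_adjoint {T T' : 𝓢(E, F) →ₗ[ℂ] 𝓢(E, F)} {s C : ℝ} (hC : 0 ≤ C)
    (hadj : ∀ f g, inner ℂ ((T f).toLp 2) (g.toLp 2) = inner ℂ (f.toLp 2) ((T' g).toLp 2))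
    (h : SobolevBound T' s C) : SobolevBound T (-s) C := fun f ↦ by
  set G := weight (-s : ℝ) (𝓕 (T f)) with hG
  set g := 𝓕⁻ (weight (-s : ℝ) G) with hg
  have hpair : inner ℂ (G.toLp 2 volume) (G.toLp 2 volume) =
      inner ℂ ((weight (-s : ℝ) (𝓕 f)).toLp 2 volume) ((weight s (𝓕 (T' g))).toLp 2 volume) := by
    calc inner ℂ (G.toLp 2 volume) (G.toLp 2 volume)
        = inner ℂ ((𝓕 (T f)).toLp 2 volume) ((𝓕 g).toLp 2 volume) := by
          rw [hg, FourierTransform.fourier_fourierInv_eq]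
          nth_rw 1 [hG]
          rw [inner_weight_left]
          simp
      _ = inner ℂ ((𝓕 f).toLp 2 volume) ((𝓕 (T' g)).toLp 2 volume) := by
          rw [inner_fourier_toL2_eq, hadj, inner_fourier_toL2_eq]
      _ = _ := by
          rw [inner_weight_left, weight_weight]
          simp
  have hg_norm : sobolevNorm s g = ‖G.toLp 2 volume‖ := by
    rw [hg, sobolevNorm_fourierInv, weight_weight]
    simp
  have hmul : ‖G.toLp 2 volume‖ ^ 2 ≤ ‖G.toLp 2 volume‖ * (C * sobolevNorm (-s) f) := by
    calc ‖G.toLp 2 volume‖ ^ 2 = ‖inner ℂ (G.toLp 2 volume) (G.toLp 2 volume)‖ := by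
          rw [inner_self_eq_norm_sq_to_K]; simp
      _ ≤ sobolevNorm (-s) f * sobolevNorm s (T' g) := by
          rw [hpair]
          exact norm_inner_le_norm _ _
      _ ≤ sobolevNorm (-s) f * (C * ‖G.toLp 2 volume‖) := by
          rw [← hg_norm]
          exact mul_le_mul_of_nonneg_left (h g) (sobolevNorm_nonneg _ _)
      _ = ‖G.toLp 2 volume‖ * (C * sobolevNorm (-s) f) := by ring
  exact le_of_sq_le_mul (mul_nonneg hC (sobolevNorm_nonneg _ _)) hmul

end Sobolev

section Multiplier

open SchwartzMap

variable {E F : Type*} [NormedAddCommGroup E]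

lemma norm_iteratedFDeriv_fderiv_apply_le [NormedSpace ℝ E] {a : E → ℂ} (ha : ContDiff ℝ ∞ a)
    (v : E) (n : ℕ) (x : E) :
    ‖iteratedFDeriv ℝ n (fun y ↦ fderiv ℝ a y v) x‖ ≤ ‖v‖ * ‖iteratedFDeriv ℝ (n + 1) a x‖ := by
  rw [← norm_iteratedFDeriv_fderiv]
  exact norm_iteratedFDeriv_clm_apply_const
    (ha.fderiv_right (m := ∞) (by simp)).contDiffAt (mod_cast le_top)

lemma hasTemperateGrowth_fderiv_apply [NormedSpace ℝ E] {a : E → ℂ} (ha : a.HasTemperateGrowth)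
    (v : E) : (fun y ↦ fderiv ℝ a y v).HasTemperateGrowth := by
  refine ⟨(ha.1.fderiv_right (m := ∞) (by simp)).clm_apply contDiff_const, fun n ↦ ?_⟩
  obtain ⟨m, C, hC⟩ := ha.2 (n + 1)
  refine ⟨m, ‖v‖ * C, fun x ↦ (norm_iteratedFDeriv_fderiv_apply_le ha.1 v n x).trans ?_⟩
  rw [mul_assoc]
  exact mul_le_mul_of_nonneg_left (hC x) (norm_nonneg v)

variable [InnerProductSpace ℝ E] [NormedAddCommGroup F] [InnerProductSpace ℂ F]

lemma lineDerivOp_smulLeftCLM {a : E → ℂ} (ha : a.HasTemperateGrowth) (v : E) (f : 𝓢(E, F)) :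
    ∂_{v} (smulLeftCLM F a f) =
      smulLeftCLM F a (∂_{v} f) + smulLeftCLM F (fun y ↦ fderiv ℝ a y v) f := by
  ext x
  have ha' : DifferentiableAt ℝ a x := ha.1.differentiable (by simp) x
  have hprod : (smulLeftCLM F a f : E → F) = a • (f : E → F) := by
    ext y; exact smulLeftCLM_apply_apply ha f y
  rw [lineDerivOp_apply_eq_fderiv, hprod, fderiv_smul ha' f.differentiableAt]
  simp [smulLeftCLM_apply_apply ha, smulLeftCLM_apply_apply (hasTemperateGrowth_fderiv_apply ha v),
    lineDerivOp_apply_eq_fderiv]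

variable [FiniteDimensional ℝ E] [MeasurableSpace E] [BorelSpace E]

lemma norm_weight_add_one_sq {ι : Type*} [Fintype ι] (b : OrthonormalBasis ι ℝ E) (s : ℝ)
    (g : 𝓢(E, F)) :
    ‖(weight (s + 1 : ℝ) g).toLp 2‖ ^ 2 = ‖(weight s g).toLp 2‖ ^ 2 +
      ∑ i, ‖(weight s (smulLeftCLM F (inner ℝ · (b i)) g)).toLp 2‖ ^ 2 := by
  have hint (f : 𝓢(E, F)) : Integrable fun x ↦ ‖f x‖ ^ 2 :=
    (f.memLp 2).integrable_norm_pow two_ne_zero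
  simp only [norm_toLp_sq]
  rw [← integral_finsetSum _ fun i _ ↦ hint _, ← integral_add (hint _)
    (integrable_finsetSum _ fun i _ ↦ hint _)]
  congr 1
  ext x
  have hsum : ∑ i, ‖weight s (smulLeftCLM F (inner ℝ · (b i)) g) x‖ ^ 2 =
      ‖x‖ ^ 2 * ‖weight s g x‖ ^ 2 := by
    rw [← b.sum_sq_norm_inner_left x, Finset.sum_mul]
    refine Finset.sum_congr rfl fun i _ ↦ ?_
    rw [weight_apply, weight_apply,
      smulLeftCLM_apply_apply (Function.hasTemperateGrowth_inner_left (b i)), smul_comm, norm_smul,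
      mul_pow]
  have hone : ‖bracketPow (1 : ℝ) x‖ ^ 2 = 1 + ‖x‖ ^ 2 := by
    simp [norm_bracketPow, exp_logBracket_sq]
  rw [hsum, add_comm s, Complex.ofReal_add, ← weight_weight, weight_apply, norm_smul, mul_pow, hone]
  ring

lemma sobolevNorm_lineDerivOp (s : ℝ) (f : 𝓢(E, F)) (v : E) :
    sobolevNorm s (∂_{v} f) =
      2 * π * ‖(weight s (smulLeftCLM F (inner ℝ · v) (𝓕 f))).toLp 2‖ := by
  rw [sobolevNorm, fourier_lineDerivOp_eq, map_smul, ← toLpCLM_apply (𝕜 := ℂ), map_smul, norm_smul,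
    toLpCLM_apply]
  simp [abs_of_pos pi_pos]

lemma sobolevNorm_add_one_sq {ι : Type*} [Fintype ι] (b : OrthonormalBasis ι ℝ E) (s : ℝ)
    (f : 𝓢(E, F)) :
    sobolevNorm (s + 1) f ^ 2 =
      sobolevNorm s f ^ 2 + ∑ i, ((2 * π)⁻¹ * sobolevNorm s (∂_{b i} f)) ^ 2 := by
  rw [sobolevNorm, norm_weight_add_one_sq b]
  simp only [sobolevNorm_lineDerivOp, inv_mul_cancel_left₀ two_pi_pos.ne']
  rfl

lemma sobolevNorm_lineDerivOp_le {ι : Type*} [Fintype ι] (b : OrthonormalBasis ι ℝ E) (i : ι)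
    (s : ℝ) (f : 𝓢(E, F)) : sobolevNorm s (∂_{b i} f) ≤ 2 * π * sobolevNorm (s + 1) f := by
  rw [← inv_mul_le_iff₀ two_pi_pos]
  refine le_of_sq_le_sq ?_ (sobolevNorm_nonneg _ f)
  rw [sobolevNorm_add_one_sq b]
  have hi := Finset.single_le_sum (f := fun j ↦ ((2 * π)⁻¹ * sobolevNorm s (∂_{b j} f)) ^ 2)
    (fun j _ ↦ sq_nonneg _) (Finset.mem_univ i)
  exact hi.trans (le_add_of_nonneg_left (sq_nonneg _))

lemma sobolevNorm_add_one_le {ι : Type*} [Fintype ι] (b : OrthonormalBasis ι ℝ E) (s : ℝ)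
    (f : 𝓢(E, F)) :
    sobolevNorm (s + 1) f ≤ sobolevNorm s f + ∑ i, sobolevNorm s (∂_{b i} f) := by
  have hsum : 0 ≤ ∑ i, sobolevNorm s (∂_{b i} f) :=
    Finset.sum_nonneg fun i _ ↦ sobolevNorm_nonneg s (∂_{b i} f)
  have hpi : (2 * π)⁻¹ ≤ 1 := inv_le_one_of_one_le₀ (by linarith [two_le_pi])
  refine le_of_sq_le_sq ?_ (add_nonneg (sobolevNorm_nonneg s f) hsum)
  calc sobolevNorm (s + 1) f ^ 2
      ≤ sobolevNorm s f ^ 2 + ∑ i, sobolevNorm s (∂_{b i} f) ^ 2 := by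
        rw [sobolevNorm_add_one_sq b]
        gcongr with i
        · exact mul_nonneg (by positivity) (sobolevNorm_nonneg s (∂_{b i} f))
        · exact mul_le_of_le_one_left (sobolevNorm_nonneg s (∂_{b i} f)) hpi
    _ ≤ sobolevNorm s f ^ 2 + (∑ i, sobolevNorm s (∂_{b i} f)) ^ 2 := by
        gcongr
        exact Finset.sum_sq_le_sq_sum_of_nonneg fun i _ ↦ sobolevNorm_nonneg s (∂_{b i} f)
    _ ≤ (sobolevNorm s f + ∑ i, sobolevNorm s (∂_{b i} f)) ^ 2 := by
        nlinarith [mul_nonneg (sobolevNorm_nonneg s f) hsum]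

lemma sobolevNorm_add_le (s : ℝ) (f g : 𝓢(E, F)) :
    sobolevNorm s (f + g) ≤ sobolevNorm s f + sobolevNorm s g := by
  simp only [sobolevNorm, FourierTransform.fourier_add, map_add, ← toLpCLM_apply (𝕜 := ℂ)]
  exact norm_add_le _ _

end Multiplier

section PointwiseMultiplier

open SchwartzMap

variable {E F : Type*} [NormedAddCommGroup E] [InnerProductSpace ℝ E] [FiniteDimensional ℝ E]
  [MeasurableSpace E] [BorelSpace E] [NormedAddCommGroup F] [InnerProductSpace ℂ F]

lemma sobolevBound_smulLeftCLM_add_one {ι : Type*} [Fintype ι] (b : OrthonormalBasis ι ℝ E)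
    {a : E → ℂ} (ha : a.HasTemperateGrowth) {s A : ℝ} {D : ι → ℝ} (hA : 0 ≤ A) (hD : ∀ i, 0 ≤ D i)
    (h : SobolevBound (smulLeftCLM F a : 𝓢(E, F) →ₗ[ℂ] 𝓢(E, F)) s A)
    (hderiv : ∀ i, SobolevBound
      (smulLeftCLM F (fun x ↦ fderiv ℝ a x (b i)) : 𝓢(E, F) →ₗ[ℂ] 𝓢(E, F)) s (D i)) :
    SobolevBound (smulLeftCLM F a : 𝓢(E, F) →ₗ[ℂ] 𝓢(E, F)) (s + 1)
      (A + ∑ i, (A * (2 * π) + D i)) := fun f ↦ by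
  have hmono : sobolevNorm s f ≤ sobolevNorm (s + 1) f := sobolevNorm_mono (by simp) f
  have hterm (i : ι) : sobolevNorm s (∂_{b i} (smulLeftCLM F a f)) ≤
      (A * (2 * π) + D i) * sobolevNorm (s + 1) f := by
    rw [lineDerivOp_smulLeftCLM ha]
    calc _ ≤ A * sobolevNorm s (∂_{b i} f) + D i * sobolevNorm s f :=
          (sobolevNorm_add_le _ _ _).trans (add_le_add (h _) (hderiv i f))
      _ ≤ A * (2 * π * sobolevNorm (s + 1) f) + D i * sobolevNorm (s + 1) f :=
          add_le_add (mul_le_mul_of_nonneg_left (sobolevNorm_lineDerivOp_le b i s f) hA)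
            (mul_le_mul_of_nonneg_left hmono (hD i))
      _ = (A * (2 * π) + D i) * sobolevNorm (s + 1) f := by ring
  calc sobolevNorm (s + 1) (smulLeftCLM F a f)
      ≤ sobolevNorm s (smulLeftCLM F a f) + ∑ i, sobolevNorm s (∂_{b i} (smulLeftCLM F a f)) :=
        sobolevNorm_add_one_le b s _
    _ ≤ A * sobolevNorm (s + 1) f + ∑ i, (A * (2 * π) + D i) * sobolevNorm (s + 1) f :=
        add_le_add ((h f).trans (mul_le_mul_of_nonneg_left hmono hA))
          (Finset.sum_le_sum fun i _ ↦ hterm i)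
    _ = (A + ∑ i, (A * (2 * π) + D i)) * sobolevNorm (s + 1) f := by
        rw [add_mul, Finset.sum_mul]

variable [CompleteSpace F]

lemma sobolevBound_smulLeftCLM_zero {a : E → ℂ} (ha : a.HasTemperateGrowth) {B : ℝ}
    (hB : ∀ x, ‖a x‖ ≤ B) : SobolevBound (smulLeftCLM F a : 𝓢(E, F) →ₗ[ℂ] 𝓢(E, F)) 0 B := fun f ↦ by
  rw [sobolevNorm_zero, sobolevNorm_zero]
  refine norm_toLp_le_of_norm_le fun x ↦ ?_
  rw [ContinuousLinearMap.coe_coe, smulLeftCLM_apply_apply ha, norm_smul]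
  exact mul_le_mul_of_nonneg_right (hB x) (norm_nonneg _)

variable (E F)

lemma exists_sobolevBound_smulLeftCLM_natCast (n : ℕ) :
    ∃ C, 0 ≤ C ∧ ∀ (a : E → ℂ) (B : ℝ), a.HasTemperateGrowth →
      (∀ j ≤ n, ∀ x, ‖iteratedFDeriv ℝ j a x‖ ≤ B) →
        SobolevBound (smulLeftCLM F a : 𝓢(E, F) →ₗ[ℂ] 𝓢(E, F)) n (C * B) := by
  induction n with
  | zero =>
    refine ⟨1, zero_le_one, fun a B ha hB ↦ ?_⟩
    rw [Nat.cast_zero, one_mul]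
    exact sobolevBound_smulLeftCLM_zero ha (by simpa using hB 0 le_rfl)
  | succ n ih =>
    obtain ⟨C, hC, hbound⟩ := ih
    let b := stdOrthonormalBasis ℝ E
    refine ⟨C + ∑ i, (C * (2 * π) + C * ‖b i‖), by positivity, fun a B ha hB ↦ ?_⟩
    have hB₀ : 0 ≤ B := (norm_nonneg _).trans (hB 0 (Nat.zero_le _) 0)
    have hsucc := sobolevBound_smulLeftCLM_add_one (F := F) (s := n) b ha
      (D := fun i ↦ C * (‖b i‖ * B)) (by positivity) (fun i ↦ by positivity)
      (hbound a B ha fun j hj ↦ hB j (hj.trans n.le_succ))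
      (fun i ↦ hbound _ _ (hasTemperateGrowth_fderiv_apply ha (b i)) fun j hj x ↦
        (norm_iteratedFDeriv_fderiv_apply_le ha.1 (b i) j x).trans
          (mul_le_mul_of_nonneg_left (hB (j + 1) (Nat.succ_le_succ hj) x) (norm_nonneg _)))
    rw [Nat.cast_succ]
    refine hsucc.mono_const (le_of_eq ?_)
    rw [add_mul, Finset.sum_mul]
    congr! 2
    ring

lemma exists_sobolevBound_smulLeftCLM_of_nonneg {s : ℝ} (hs : 0 ≤ s) :
    ∃ (C : ℝ) (n : ℕ), 0 ≤ C ∧ ∀ (a : E → ℂ) (B : ℝ), a.HasTemperateGrowth →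
      (∀ j ≤ n, ∀ x, ‖iteratedFDeriv ℝ j a x‖ ≤ B) →
        SobolevBound (smulLeftCLM F a : 𝓢(E, F) →ₗ[ℂ] 𝓢(E, F)) s (C * B) := by
  obtain ⟨n, hn⟩ := exists_nat_gt s
  have hn₀ : (0 : ℝ) < n := hs.trans_lt hn
  obtain ⟨C, hC, hbound⟩ := exists_sobolevBound_smulLeftCLM_natCast E F n
  refine ⟨rexp 3 * max 1 C, n, by positivity, fun a B ha hB ↦ ?_⟩
  have hB₀ : 0 ≤ B := (norm_nonneg _).trans (hB 0 (Nat.zero_le _) 0)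
  have h₀ : SobolevBound (smulLeftCLM F a : 𝓢(E, F) →ₗ[ℂ] 𝓢(E, F)) 0 (max 1 C * B) :=
    (sobolevBound_smulLeftCLM_zero ha (by simpa using hB 0 (Nat.zero_le n))).mono_const
      (le_mul_of_one_le_left hB₀ (le_max_left 1 C))
  have h₁ : SobolevBound (smulLeftCLM F a : 𝓢(E, F) →ₗ[ℂ] 𝓢(E, F)) n (max 1 C * B) :=
    (hbound a B ha hB).mono_const (mul_le_mul_of_nonneg_right (le_max_right 1 C) hB₀)
  have hs_div := h₀.interpolate (by positivity) h₁ (θ := s / n)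
    ⟨div_nonneg hs hn₀.le, div_le_one_of_le₀ hn.le hn₀.le⟩
  rwa [div_mul_cancel₀ s hn₀.ne', ← mul_assoc] at hs_div

lemma exists_sobolevBound_smulLeftCLM (s : ℝ) :
    ∃ (C : ℝ) (n : ℕ), 0 ≤ C ∧ ∀ (a : E → ℂ) (B : ℝ), a.HasTemperateGrowth →
      (∀ j ≤ n, ∀ x, ‖iteratedFDeriv ℝ j a x‖ ≤ B) →
        SobolevBound (smulLeftCLM F a : 𝓢(E, F) →ₗ[ℂ] 𝓢(E, F)) s (C * B) := by
  rcases le_total 0 s with hs | hs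
  · exact exists_sobolevBound_smulLeftCLM_of_nonneg E F hs
  obtain ⟨C, n, hC, hbound⟩ := exists_sobolevBound_smulLeftCLM_of_nonneg E F (neg_nonneg.2 hs)
  refine ⟨C, n, hC, fun a B ha hB ↦ ?_⟩
  have hB₀ : 0 ≤ B := (norm_nonneg _).trans (hB 0 (Nat.zero_le _) 0)
  have hconj : (Complex.conjLIE ∘ a).HasTemperateGrowth :=
    Complex.conjCLE.toContinuousLinearMap.hasTemperateGrowth.comp ha
  rw [← neg_neg s]
  refine SobolevBound.neg_of_adjoint (mul_nonneg hC hB₀)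
    (inner_toLp_smulLeftCLM_left ha hconj fun _ ↦ rfl) (hbound _ B hconj fun j hj x ↦ ?_)
  rw [Complex.conjLIE.norm_iteratedFDeriv_comp_left]
  exact hB j hj x

end PointwiseMultiplier

section WeightedSobolevSpaces

open SchwartzMap FourierTransform

variable {E F : Type*} [NormedAddCommGroup E] [InnerProductSpace ℝ E] [FiniteDimensional ℝ E]
  [MeasurableSpace E] [BorelSpace E] [NormedAddCommGroup F] [InnerProductSpace ℂ F]

/-- The norm of `⟨x⟩^l f` in the Sobolev space `H^k`, that is, the weighted norm `‖f‖_{H^k_l}`. -/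
def weightedSobolevNorm (k l : ℝ) (f : 𝓢(E, F)) : ℝ := sobolevNorm k (weight l f)

lemma weightedSobolevNorm_zero (k : ℝ) (f : 𝓢(E, F)) :
    weightedSobolevNorm k 0 f = sobolevNorm k f := by
  rw [weightedSobolevNorm, Complex.ofReal_zero, weight_zero]

lemma weightedSobolevNorm_nonneg (k l : ℝ) (f : 𝓢(E, F)) : 0 ≤ weightedSobolevNorm k l f :=
  sobolevNorm_nonneg _ _

variable (E F) [CompleteSpace F]

lemma exists_sobolevNorm_weight_le (k : ℝ) :
    ∃ (C : ℝ) (N : ℕ), 0 ≤ C ∧ ∀ (z : ℂ) (f : 𝓢(E, F)),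
      sobolevNorm k (weight z f) ≤ C * (1 + |z.im|) ^ N * weightedSobolevNorm k z.re f := by
  obtain ⟨C, N, hC, hbound⟩ := exists_sobolevBound_smulLeftCLM E F k
  obtain ⟨D, hD, hderiv⟩ := exists_norm_iteratedFDeriv_bracketPow_le (E := E) N
  refine ⟨C * D, N, mul_nonneg hC hD, fun z f ↦ ?_⟩
  let w : ℂ := z.im * Complex.I
  have hB (j : ℕ) (hj : j ≤ N) (x : E) :
      ‖iteratedFDeriv ℝ j (bracketPow w) x‖ ≤ D * (1 + |z.im|) ^ N := by
    simpa [w, norm_bracketPow] using hderiv w j hj x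
  have hmul := hbound _ _ (hasTemperateGrowth_bracketPow w) hB (weight z.re f)
  have hz : weight z f = weight w (weight z.re f) := by
    rw [weight_weight, add_comm, Complex.re_add_im]
  rw [hz, mul_assoc C]
  exact hmul

lemma exists_norm_steinFamily_fourier_le (k₀ k₁ l₀ l₁ t : ℝ) :
    ∃ (C : ℝ) (N : ℕ), 0 ≤ C ∧ ∀ (z : ℂ) (f : 𝓢(E, F)), z.re = t →
      ‖(steinFamily (fourierₗ ℂ 𝓢(E, F)) k₀ k₁ l₀ l₁ z f).toLp 2‖ ≤
        C * (1 + |z.im|) ^ N *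
          weightedSobolevNorm (AffineMap.lineMap k₀ k₁ t) (AffineMap.lineMap l₀ l₁ t) f := by
  obtain ⟨C, N, hC, hbound⟩ :=
    exists_sobolevNorm_weight_le E F (AffineMap.lineMap k₀ k₁ t)
  refine ⟨C * (1 + |l₁ - l₀|) ^ N, N, by positivity, fun z f hz ↦ ?_⟩
  let w : ℂ := AffineMap.lineMap (l₀ : ℂ) (l₁ : ℂ) z
  have hre : w.re = AffineMap.lineMap l₀ l₁ t := by rw [re_lineMap_ofReal, hz]
  have him : 1 + |w.im| ≤ (1 + |l₁ - l₀|) * (1 + |z.im|) := by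
    have : w.im = z.im * (l₁ - l₀) := by simp [w, AffineMap.lineMap_apply]
    rw [this, abs_mul]
    nlinarith [abs_nonneg z.im, abs_nonneg (l₁ - l₀)]
  calc ‖(steinFamily (fourierₗ ℂ 𝓢(E, F)) k₀ k₁ l₀ l₁ z f).toLp 2 volume‖
      = sobolevNorm (AffineMap.lineMap k₀ k₁ t) (weight w f) :=
        norm_weight_eq_of_re_eq (by rw [re_lineMap_ofReal, hz, Complex.ofReal_re]) _
    _ ≤ C * (1 + |w.im|) ^ N * weightedSobolevNorm _ w.re f := hbound w f
    _ ≤ C * ((1 + |l₁ - l₀|) * (1 + |z.im|)) ^ N * weightedSobolevNorm _ w.re f := by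
        gcongr
        exact weightedSobolevNorm_nonneg _ _ _
    _ = _ := by rw [hre, mul_pow, ← mul_assoc C]

theorem exists_weightedSobolevNorm_le_rpow_mul_rpow (k₀ k₁ l₀ l₁ : ℝ) :
    ∃ C > 0, ∀ θ ∈ Set.Icc (0 : ℝ) 1, ∀ f : 𝓢(E, F),
      weightedSobolevNorm (AffineMap.lineMap k₀ k₁ θ) (AffineMap.lineMap l₀ l₁ θ) f ≤
        C * (weightedSobolevNorm k₀ l₀ f ^ (1 - θ) * weightedSobolevNorm k₁ l₁ f ^ θ) := by
  obtain ⟨C₀, N₀, hC₀, h₀⟩ := exists_norm_steinFamily_fourier_le E F k₀ k₁ l₀ l₁ 0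
  obtain ⟨C₁, N₁, hC₁, h₁⟩ := exists_norm_steinFamily_fourier_le E F k₀ k₁ l₀ l₁ 1
  let N := max N₀ N₁
  let A := 1 + C₀ + C₁
  have hA : 0 < A := by positivity
  refine ⟨N ! * rexp 3 * A, by positivity, fun θ hθ f ↦ ?_⟩
  have hgrow {C X t : ℝ} {M : ℕ} (hC : 0 ≤ C) (hCA : C ≤ A) (hM : M ≤ N) (hX : 0 ≤ X) :
      C * (1 + |t|) ^ M * X ≤ A * X * (1 + |t|) ^ N := by
    rw [mul_right_comm]
    gcongr
    exact le_add_of_nonneg_right (abs_nonneg t)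
  have hfourier (g : 𝓢(E, F)) :
      ‖(fourierₗ ℂ 𝓢(E, F) g).toLp 2‖ ≤ 1 * ‖g.toLp 2‖ :=
    (norm_fourier_toL2_eq g).le.trans_eq (one_mul _).symm
  have hstein := norm_steinFamily_le (fourierₗ ℂ 𝓢(E, F)) zero_le_one hfourier
    (fun z hz ↦ (h₀ z f hz).trans
      (hgrow hC₀ (by linarith) (le_max_left _ _) (weightedSobolevNorm_nonneg _ _ f)))
    (fun z hz ↦ (h₁ z f hz).trans
      (hgrow hC₁ (by linarith) (le_max_right _ _) (weightedSobolevNorm_nonneg _ _ f))) hθ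
  rw [mul_rpow_mul_mul_rpow (weightedSobolevNorm_nonneg _ _ f) (weightedSobolevNorm_nonneg _ _ f)
    hA.le hθ, steinFamily_ofReal, ← mul_assoc] at hstein
  simp only [AffineMap.lineMap_apply_zero, AffineMap.lineMap_apply_one] at hstein
  exact hstein

end WeightedSobolevSpaces

section Coordinates

lemma jb_nonneg (v : V) : 0 ≤ jb v := rpow_nonneg (by positivity) _

lemma jb_rpow (s : ℝ) (v : V) : ((jb v ^ s : ℝ) : ℂ) = bracketPow s v := by
  rw [bracketPow_ofReal, jb, ← rpow_mul (by positivity), one_div_mul_eq_div]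

lemma Hnorm_eq_sobolevNorm (k : ℝ) (f : 𝓢(V, ℂ)) : Hnorm k f = sobolevNorm k f := by
  have hsq : ∫ ξ, jb ξ ^ (2 * k) * ‖𝓕 (f : V → ℂ) ξ‖ ^ 2 = sobolevNorm k f ^ 2 := by
    rw [sobolevNorm, norm_toLp_sq]
    refine integral_congr_ae (ae_of_all _ fun ξ ↦ ?_)
    dsimp only
    rw [weight_apply, norm_smul, mul_pow, ← jb_rpow, Complex.norm_real,
      norm_of_nonneg (rpow_nonneg (jb_nonneg ξ) k), ← rpow_mul_natCast (jb_nonneg ξ), mul_comm 2 k]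
    rfl
  rw [Hnorm, hsq, ← sqrt_eq_rpow, sqrt_sq (sobolevNorm_nonneg k f)]

lemma HnormW_eq_weightedSobolevNorm (k l : ℝ) (f : 𝓢(V, ℂ)) :
    HnormW k l f = weightedSobolevNorm k l f := by
  rw [weightedSobolevNorm, ← Hnorm_eq_sobolevNorm, HnormW]
  congr 1
  ext v
  rw [jb_rpow, weight_apply, smul_eq_mul]

end Coordinates

end WeightedSobolev

open WeightedSobolev in
theorem weighted_sobolev_bilinear_interpolation_general (E F : Type*) [NormedAddCommGroup E]
    [InnerProductSpace ℝ E] [FiniteDimensional ℝ E] [MeasurableSpace E] [BorelSpace E]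
    [NormedAddCommGroup F] [InnerProductSpace ℂ F] [CompleteSpace F] (k l δ m : ℝ) :
    ∃ C > 0, ∀ f : 𝓢(E, F),
      weightedSobolevNorm k l f ^ 2 ≤
        C * weightedSobolevNorm (k + δ) (l + m) f * weightedSobolevNorm (k - δ) (l - m) f := by
  obtain ⟨C, hC, hbound⟩ :=
    exists_weightedSobolevNorm_le_rpow_mul_rpow E F (k + δ) (k - δ) (l + m) (l - m)
  refine ⟨C ^ 2, pow_pos hC 2, fun f ↦ ?_⟩
  have hmid (p q : ℝ) : AffineMap.lineMap (p + q) (p - q) (2⁻¹ : ℝ) = p := by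
    rw [AffineMap.lineMap_apply_module]
    norm_num
    ring
  have h := hbound 2⁻¹ ⟨by norm_num, by norm_num⟩ f
  rw [hmid, hmid] at h
  set X := weightedSobolevNorm (k + δ) (l + m) f
  set Y := weightedSobolevNorm (k - δ) (l - m) f
  have hX₀ : 0 ≤ X := weightedSobolevNorm_nonneg _ _ f
  have hY₀ : 0 ≤ Y := weightedSobolevNorm_nonneg _ _ f
  calc weightedSobolevNorm k l f ^ 2
      ≤ (C * (X ^ (1 - 2⁻¹ : ℝ) * Y ^ (2⁻¹ : ℝ))) ^ 2 :=
        pow_le_pow_left₀ (weightedSobolevNorm_nonneg k l f) h 2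
    _ = C ^ 2 * X * Y := by
        rw [show (1 - 2⁻¹ : ℝ) = 1 / 2 by norm_num, ← one_div, ← sqrt_eq_rpow, ← sqrt_eq_rpow,
          mul_pow, mul_pow, sq_sqrt hX₀, sq_sqrt hY₀, mul_assoc]

/-- bilinear interpolation inequality
`‖u‖²_{H^k_l} ≤ C ‖u‖_{H^{k+δ}_{2l}} ‖u‖_{H^{k-δ}}`. -/
theorem weighted_sobolev_bilinear_interpolation (k l δ : ℝ) (hδ : 0 < δ) :
    ∃ C > 0, ∀ u : 𝓢(V, ℂ),
      HnormW k l (u : V → ℂ) ^ 2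
        ≤ C * HnormW (k + δ) (2*l) (u : V → ℂ) * Hnorm (k - δ) (u : V → ℂ) := by
  simpa only [WeightedSobolev.HnormW_eq_weightedSobolevNorm, WeightedSobolev.Hnorm_eq_sobolevNorm,
    WeightedSobolev.weightedSobolevNorm_zero, sub_self, two_mul] using
    weighted_sobolev_bilinear_interpolation_general V ℂ k l δ l
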